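/- arXiv:1509.05739 — 3 statements merged into one kernel-verified Lean document; each statement's English description precedes it below -/
import Mathlib

section
/- Let n be an odd prime, m an odd divisor of n−1, A the unique subgroup of order m of (ℤ/nℤ)ˣ, ω = e^{2πi/n}, and κ := (n−1)/m. Then the coherence μ := max over nonzero residues ℓ modulo n of (1/m)|Σ_{a ∈ A} ω^{ℓ a}| satisfies μ ≤ (1/κ)·√( (1/m + (κ/2 − 1)·β)² + (κ/2)²·β² ), where β = √((1/m)(κ + 1/m)). -/
/-- `∑_{a ∈ A} ω^(ℓ·a)` with `ω = e^{2πi/n}`, for `A ≤ (ℤ/nℤ)ˣ` and `ℓ` a nonzero residue. -/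
noncomputable def harmonicSum (n : ℕ) [NeZero n] (A : Subgroup (ZMod n)ˣ) [Fintype A]
    (ℓ : (ZMod n)ˣ) : ℂ :=
  ∑ a : A, Complex.exp (2 * Real.pi * Complex.I / n) ^
      (((ℓ * (a : (ZMod n)ˣ) : (ZMod n)ˣ) : ZMod n)).val

/-!
Let `η(x) = ∑_{a ∈ A} ψ(x a)` for a primitive additive character `ψ` of a finite ring `R`, and let
`m = |A|` and `κ = (|R| - 1) / m`. By orthogonality, `∑_x η(x) η(c x)` counts the solutions of
`a + c b = 0` with `a, b ∈ A`. Since `-1 ∉ A` when `m` is odd, taking `c = ±1` shows that `Re η` and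
`Im η` have the same second moment `|R| m / 2`. Both `Re η` and `(Im η)²` are constant on the `2m`
points `±u a`. Hence positivity of the remaining terms gives `(Im η(u))² ≤ |R| / 4`, and
Cauchy–Schwarz over the remaining nonzero points gives `|κ Re η(u) + 1| ≤ (κ/2 - 1) √|R|`.
-/

open Finset ComplexConjugate

lemma sq_sum_sub_card_mul_le {ι : Type*} {s t : Finset ι} (hts : t ⊆ s) {f : ι → ℝ} {c : ℝ}
    (hf : ∀ i ∈ t, f i = c) :
    (∑ i ∈ s, f i - #t * c) ^ 2 ≤ (#s - #t) * (∑ i ∈ s, f i ^ 2 - #t * c ^ 2) := by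
  classical
  have hsum : ∑ i ∈ s \ t, f i = ∑ i ∈ s, f i - #t * c := by
    rw [eq_sub_iff_add_eq, ← sum_sdiff hts, sum_congr rfl hf, sum_const, nsmul_eq_mul]
  have hsum_sq : ∑ i ∈ s \ t, f i ^ 2 = ∑ i ∈ s, f i ^ 2 - #t * c ^ 2 := by
    rw [eq_sub_iff_add_eq, ← sum_sdiff hts, sum_congr rfl fun i hi ↦ congrArg (· ^ 2) (hf i hi),
      sum_const, nsmul_eq_mul]
  have hcard : (#(s \ t) : ℝ) = #s - #t := by
    rw [card_sdiff_of_subset hts, Nat.cast_sub (card_le_card hts)]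
  rw [← hsum, ← hsum_sq, ← hcard]
  exact sq_sum_le_card_mul_sum_sq

lemma neg_one_notMem_of_odd_natCard {G : Type*} [Group G] [HasDistribNeg G]
    (hG : (-1 : G) ≠ 1) {A : Subgroup G} (hA : Odd (Nat.card A)) : -1 ∉ A := fun hmem ↦ by
  have hpow : (-1 : G) ^ Nat.card A = 1 :=
    congrArg Subtype.val (pow_card_eq_one' (x := (⟨-1, hmem⟩ : A)))
  exact hG (by rwa [hA.neg_one_pow] at hpow)

variable {R : Type*} [CommRing R]

lemma nontrivial_of_neg_one_notMem {A : Subgroup Rˣ} (hA : -1 ∉ A) : Nontrivial R :=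
  nontrivial_of_ne (-1) 1 fun h ↦ hA <| by
    rw [show (-1 : Rˣ) = 1 from Units.ext (by simpa using h)]
    exact A.one_mem

/-- The Gaussian period `∑_{a ∈ A} ψ (x a)` of the additive character `ψ` along the group of
units `A`, as a function on the whole ring: the value at `x = 0` makes orthogonality of `ψ`
directly applicable. -/
def gaussianPeriod (ψ : AddChar R ℂ) (A : Subgroup Rˣ) [Fintype A] (x : R) : ℂ :=
  ∑ a : A, ψ (x * (a : Rˣ))

/-- The set `u A ∪ -u A`, as a set of ring elements. The real part and the squared imaginary part
of a Gaussian period along `A` are constant on it. -/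
def signedCoset [DecidableEq R] (A : Subgroup Rˣ) [Fintype A] (u : Rˣ) : Finset R :=
  univ.image (Sum.elim (fun a : A ↦ (u * (a : Rˣ) : R)) fun a : A ↦ -(u * (a : Rˣ)))

section

variable {ψ : AddChar R ℂ} {A : Subgroup Rˣ} [Fintype A]

@[simp]
lemma gaussianPeriod_zero : gaussianPeriod ψ A 0 = Fintype.card A := by
  simp [gaussianPeriod]

lemma gaussianPeriod_mul_coe (x : R) (a : A) :
    gaussianPeriod ψ A (x * (a : Rˣ)) = gaussianPeriod ψ A x :=
  Fintype.sum_equiv (Equiv.mulLeft a) _ _ fun b ↦ by simp [mul_assoc]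

lemma gaussianPeriod_neg [Finite R] (x : R) :
    gaussianPeriod ψ A (-x) = conj (gaussianPeriod ψ A x) := by
  simp only [gaussianPeriod, map_sum, neg_mul, AddChar.map_neg_eq_conj]

section SignedCoset

variable [DecidableEq R]

lemma mem_signedCoset {u : Rˣ} {x : R} :
    x ∈ signedCoset A u ↔ ∃ a : A, x = u * (a : Rˣ) ∨ x = -(u * (a : Rˣ)) := by
  simp [signedCoset, exists_or, eq_comm]

lemma card_signedCoset (hA : -1 ∉ A) (u : Rˣ) : #(signedCoset A u) = 2 * Fintype.card A := by
  have hinj : Function.Injective fun a : A ↦ (u * (a : Rˣ) : R) := fun a b hab ↦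
    Subtype.ext <| Units.ext <| u.isUnit.mul_left_cancel hab
  have hdisj (a b : A) : (u * (a : Rˣ) : R) ≠ -(u * (b : Rˣ)) := fun hab ↦ hA <| by
    have hneg : (a : Rˣ) = -b := Units.ext <| u.isUnit.mul_left_cancel <| by simpa using hab
    simpa [hneg] using (a * b⁻¹).2
  exact (card_image_of_injective univ (hinj.sumElim (neg_injective.comp hinj) hdisj)).trans
    (by simp [two_mul])

lemma signedCoset_subset_compl_zero [Nontrivial R] [Fintype R] (u : Rˣ) :
    signedCoset A u ⊆ {0}ᶜ := fun x hx ↦ by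
  obtain ⟨a, rfl | rfl⟩ := mem_signedCoset.mp hx <;> simp [← Units.val_mul]

variable [Finite R] {u : Rˣ} {x : R}

lemma re_gaussianPeriod_of_mem_signedCoset (hx : x ∈ signedCoset A u) :
    (gaussianPeriod ψ A x).re = (gaussianPeriod ψ A u).re := by
  obtain ⟨a, rfl | rfl⟩ := mem_signedCoset.mp hx <;>
    simp [gaussianPeriod_neg, gaussianPeriod_mul_coe]

lemma im_sq_gaussianPeriod_of_mem_signedCoset (hx : x ∈ signedCoset A u) :
    (gaussianPeriod ψ A x).im ^ 2 = (gaussianPeriod ψ A u).im ^ 2 := by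
  obtain ⟨a, rfl | rfl⟩ := mem_signedCoset.mp hx <;>
    simp [gaussianPeriod_neg, gaussianPeriod_mul_coe]

end SignedCoset

section Moments

variable [Fintype R]

lemma sum_gaussianPeriod [Nontrivial R] (hψ : ψ.IsPrimitive) :
    ∑ x, gaussianPeriod ψ A x = 0 := by
  classical
  simp only [gaussianPeriod]
  rw [sum_comm]
  simp [AddChar.sum_mulShift _ hψ]

open Classical in
lemma sum_gaussianPeriod_mul_gaussianPeriod (hψ : ψ.IsPrimitive) (c : Rˣ) :
    ∑ x, gaussianPeriod ψ A x * gaussianPeriod ψ A (x * c) =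
      if -c ∈ A then (Fintype.card R * Fintype.card A : ℂ) else 0 := by
  have hsolution (a b : A) :
      ((a : Rˣ) + c * (b : Rˣ) : R) = 0 ↔ -c = ((a * b⁻¹ : A) : Rˣ) := by
    rw [Subgroup.coe_mul, Subgroup.coe_inv, eq_mul_inv_iff_mul_eq, Units.ext_iff,
      add_eq_zero_iff_neg_eq']
    simp
  have hcount (a : A) :
      ∑ b : A, (if ((a : Rˣ) + c * (b : Rˣ) : R) = 0 then (Fintype.card R : ℂ) else 0) =
        if -c ∈ A then (Fintype.card R : ℂ) else 0 := by
    simp only [hsolution]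
    split_ifs with hc
    · have hunique (b : A) : -c = ((a * b⁻¹ : A) : Rˣ) ↔ b = (⟨-c, hc⟩ : A)⁻¹ * a := by
        rw [eq_inv_mul_iff_mul_eq, ← eq_mul_inv_iff_mul_eq, Subtype.ext_iff]
      simp only [hunique, sum_ite_eq', mem_univ, if_true]
    · exact sum_eq_zero fun b _ ↦ if_neg fun h ↦ hc (by simpa [h] using (a * b⁻¹).2)
  calc ∑ x, gaussianPeriod ψ A x * gaussianPeriod ψ A (x * c)
      = ∑ x, ∑ a : A, ∑ b : A, ψ (x * ((a : Rˣ) + c * (b : Rˣ))) := by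
        simp only [gaussianPeriod, sum_mul_sum, ← AddChar.map_add_eq_mul, mul_add, mul_assoc]
    _ = ∑ a : A, ∑ b : A, ∑ x, ψ (x * ((a : Rˣ) + c * (b : Rˣ))) := by
        rw [sum_comm]
        exact sum_congr rfl fun a _ ↦ sum_comm
    _ = if -c ∈ A then (Fintype.card R * Fintype.card A : ℂ) else 0 := by
        simp [AddChar.sum_mulShift _ hψ, hcount, mul_comm]

lemma sum_re_gaussianPeriod_compl_zero [Nontrivial R] [DecidableEq R] (hψ : ψ.IsPrimitive) :
    ∑ x ∈ {0}ᶜ, (gaussianPeriod ψ A x).re = -Fintype.card A := by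
  have hsum := congrArg Complex.re (sum_gaussianPeriod (A := A) hψ)
  rw [Fintype.sum_eq_add_sum_compl 0] at hsum
  simp only [gaussianPeriod_zero, Complex.add_re, Complex.natCast_re, Complex.re_sum,
    Complex.zero_re] at hsum
  linarith

lemma sum_re_sq_add_sum_im_sq_gaussianPeriod (hψ : ψ.IsPrimitive) :
    ∑ x, (gaussianPeriod ψ A x).re ^ 2 + ∑ x, (gaussianPeriod ψ A x).im ^ 2 =
      Fintype.card R * Fintype.card A := by
  have hsum := congrArg Complex.re (sum_gaussianPeriod_mul_gaussianPeriod (A := A) hψ (-1))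
  simpa [gaussianPeriod_neg, sum_add_distrib, sq] using hsum

lemma sum_re_sq_gaussianPeriod_eq_sum_im_sq (hψ : ψ.IsPrimitive) (hA : -1 ∉ A) :
    ∑ x, (gaussianPeriod ψ A x).re ^ 2 = ∑ x, (gaussianPeriod ψ A x).im ^ 2 := by
  have hsum := congrArg Complex.re (sum_gaussianPeriod_mul_gaussianPeriod (A := A) hψ 1)
  simpa [hA, sub_eq_zero, sq] using hsum

lemma sum_re_sq_gaussianPeriod_compl_zero [DecidableEq R] (hψ : ψ.IsPrimitive) (hA : -1 ∉ A) :
    ∑ x ∈ {0}ᶜ, (gaussianPeriod ψ A x).re ^ 2 =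
      Fintype.card R * Fintype.card A / 2 - Fintype.card A ^ 2 := by
  have hsum := sum_re_sq_add_sum_im_sq_gaussianPeriod (A := A) hψ
  rw [← sum_re_sq_gaussianPeriod_eq_sum_im_sq hψ hA, Fintype.sum_eq_add_sum_compl 0] at hsum
  simp only [gaussianPeriod_zero, Complex.natCast_re] at hsum
  linarith

end Moments

section Bounds

variable [Fintype R]

lemma sq_im_gaussianPeriod_le (hψ : ψ.IsPrimitive) (hA : -1 ∉ A) (u : Rˣ) :
    (gaussianPeriod ψ A u).im ^ 2 ≤ Fintype.card R / 4 := by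
  classical
  have hm : (0 : ℝ) < Fintype.card A := by exact_mod_cast Fintype.card_pos
  have hcoset : 2 * Fintype.card A * (gaussianPeriod ψ A u).im ^ 2 ≤
      ∑ x, (gaussianPeriod ψ A x).im ^ 2 := calc
    _ = ∑ x ∈ signedCoset A u, (gaussianPeriod ψ A x).im ^ 2 := by
      rw [sum_congr rfl fun x hx ↦ im_sq_gaussianPeriod_of_mem_signedCoset hx]
      simp [card_signedCoset hA]
    _ ≤ _ := sum_le_univ_sum_of_nonneg fun x ↦ sq_nonneg _
  have hsum := sum_re_sq_add_sum_im_sq_gaussianPeriod (A := A) hψ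
  rw [sum_re_sq_gaussianPeriod_eq_sum_im_sq hψ hA] at hsum
  refine le_of_mul_le_mul_left ?_ hm
  linarith

lemma two_mul_card_lt_card (hA : -1 ∉ A) : 2 * Fintype.card A < Fintype.card R := by
  classical
  have := nontrivial_of_neg_one_notMem hA
  have hcard := card_le_card (signedCoset_subset_compl_zero (A := A) 1)
  rw [card_signedCoset hA, card_compl, card_singleton] at hcard
  exact Nat.lt_of_le_pred Fintype.card_pos hcard

variable {κ : ℝ}

lemma two_le_of_card_mul_eq (hA : -1 ∉ A) (hκ : Fintype.card A * κ = Fintype.card R - 1) :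
    2 ≤ κ := by
  have hm : (0 : ℝ) < Fintype.card A := by exact_mod_cast Fintype.card_pos
  have hcard : 2 * (Fintype.card A : ℝ) + 1 ≤ Fintype.card R := by
    exact_mod_cast two_mul_card_lt_card hA
  refine le_of_mul_le_mul_left ?_ hm
  linarith

lemma sq_mul_re_gaussianPeriod_add_one_le (hψ : ψ.IsPrimitive) (hA : -1 ∉ A)
    (hκ : Fintype.card A * κ = Fintype.card R - 1) (u : Rˣ) :
    (κ * (gaussianPeriod ψ A u).re + 1) ^ 2 ≤ (κ / 2 - 1) ^ 2 * Fintype.card R := by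
  classical
  have : Nontrivial R := nontrivial_of_neg_one_notMem hA
  set m := (Fintype.card A : ℝ) with hm_def
  set q := (Fintype.card R : ℝ)
  set X := (gaussianPeriod ψ A u).re
  have hm : 0 < m := by simp [hm_def, Fintype.card_pos]
  have hκ_two := two_le_of_card_mul_eq hA hκ
  have hq : q = m * κ + 1 := by linarith
  have hcard_compl : (#({0}ᶜ : Finset R) : ℝ) = m * κ := by
    rw [card_compl, card_singleton, Nat.cast_pred Fintype.card_pos, hκ]
  have hcard_coset : (#(signedCoset A u) : ℝ) = 2 * m := by simp [card_signedCoset hA, hm_def]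
  have hcauchy := sq_sum_sub_card_mul_le (signedCoset_subset_compl_zero (A := A) u) fun x hx ↦
    re_gaussianPeriod_of_mem_signedCoset (ψ := ψ) hx
  rw [sum_re_gaussianPeriod_compl_zero hψ,
    sum_re_sq_gaussianPeriod_compl_zero hψ hA, hcard_compl, hcard_coset] at hcauchy
  have hreduced : (1 + 2 * X) ^ 2 ≤ (κ - 2) * ((q - 2 * m) / 2 - 2 * X ^ 2) := by
    refine le_of_mul_le_mul_left ?_ (pow_pos hm 2)
    linarith
  calc (κ * X + 1) ^ 2
      = κ / 2 * (1 + 2 * X) ^ 2 + κ * (κ - 2) * X ^ 2 - (κ / 2 - 1) := by ring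
    _ ≤ κ / 2 * ((κ - 2) * ((q - 2 * m) / 2 - 2 * X ^ 2)) + κ * (κ - 2) * X ^ 2 - (κ / 2 - 1) := by
        gcongr
    _ = (κ / 2 - 1) ^ 2 * q := by
        rw [hq]
        ring

lemma mul_norm_gaussianPeriod_le (hψ : ψ.IsPrimitive) (hA : -1 ∉ A)
    (hκ : Fintype.card A * κ = Fintype.card R - 1) (u : Rˣ) :
    κ * ‖gaussianPeriod ψ A u‖ ≤
      √((1 + (κ / 2 - 1) * √(Fintype.card R)) ^ 2 + (κ / 2) ^ 2 * √(Fintype.card R) ^ 2) := by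
  set q := (Fintype.card R : ℝ)
  have hq : √q ^ 2 = q := Real.sq_sqrt (Nat.cast_nonneg _)
  have hbound : 0 ≤ (κ / 2 - 1) * √q :=
    mul_nonneg (by linarith [two_le_of_card_mul_eq hA hκ]) (Real.sqrt_nonneg q)
  have hre : (κ * (gaussianPeriod ψ A u).re) ^ 2 ≤ (1 + (κ / 2 - 1) * √q) ^ 2 := by
    have habs := abs_le_of_sq_le_sq' (b := (κ / 2 - 1) * √q)
      (by simpa [mul_pow, hq] using sq_mul_re_gaussianPeriod_add_one_le hψ hA hκ u) hbound
    exact sq_le_sq' (by linarith [habs.1]) (by linarith [habs.2])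
  have him : (κ * (gaussianPeriod ψ A u).im) ^ 2 ≤ (κ / 2) ^ 2 * √q ^ 2 := by
    rw [hq]
    linarith [mul_le_mul_of_nonneg_left (sq_im_gaussianPeriod_le hψ hA u) (sq_nonneg κ)]
  apply Real.le_sqrt_of_sq_le
  rw [mul_pow, Complex.sq_norm, Complex.normSq_apply]
  linarith

end Bounds

end

lemma harmonicSum_eq_gaussianPeriod (n : ℕ) [NeZero n] (A : Subgroup (ZMod n)ˣ) [Fintype A]
    (ℓ : (ZMod n)ˣ) : harmonicSum n A ℓ = gaussianPeriod ZMod.stdAddChar A (ℓ : ZMod n) :=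
  sum_congr rfl fun a _ ↦ by
    rw [ZMod.stdAddChar_apply, ZMod.toCircle_apply, ← Units.val_mul, ← Complex.exp_nat_mul]
    congr 1
    ring

theorem harmonic_frame_coherence_bound_m_odd_general [Fintype R] {ψ : AddChar R ℂ}
    (hψ : ψ.IsPrimitive) {A : Subgroup Rˣ} [Fintype A] (hA : -1 ∉ A) {m κ : ℝ}
    (hm : Nat.card A = m) (hκ : m * κ = Fintype.card R - 1) (u : Rˣ) :
    (1 / m) * ‖gaussianPeriod ψ A u‖ ≤
      (1 / κ) * √((1 / m + (κ / 2 - 1) * √((1 / m) * (κ + 1 / m))) ^ 2 +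
        (κ / 2) ^ 2 * √((1 / m) * (κ + 1 / m)) ^ 2) := by
  rw [Nat.card_eq_fintype_card] at hm
  have hm_pos : 0 < m := by simp [← hm, Fintype.card_pos]
  have hκ_pos : 0 < κ := by linarith [two_le_of_card_mul_eq hA (hm ▸ hκ)]
  set q := (Fintype.card R : ℝ)
  have hβ : √((1 / m) * (κ + 1 / m)) = √q / m := by
    have hq : (1 / m) * (κ + 1 / m) = q / m ^ 2 := by
      field_simp
      linarith
    rw [hq, Real.sqrt_div' _ (sq_nonneg m), Real.sqrt_sq hm_pos.le]
  have hscale : (1 / m + (κ / 2 - 1) * (√q / m)) ^ 2 + (κ / 2) ^ 2 * (√q / m) ^ 2 =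
      ((1 + (κ / 2 - 1) * √q) ^ 2 + (κ / 2) ^ 2 * √q ^ 2) / m ^ 2 := by ring
  rw [hβ, hscale, Real.sqrt_div' _ (sq_nonneg m), Real.sqrt_sq hm_pos.le, one_div_mul_eq_div,
    one_div_mul_eq_div, div_right_comm]
  gcongr
  rw [le_div_iff₀' hκ_pos]
  exact mul_norm_gaussianPeriod_le hψ hA (hm ▸ hκ) u

/-- Theorem 5 (`m` odd). Let `n` be an odd prime, `m` an odd divisor of `n-1` with
`κ = (n-1)/m`, and `A` the unique subgroup of `(ℤ/nℤ)ˣ` of order `m`. The coherence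
`μ = max_{ℓ ≠ 0} (1/m)|∑_{a ∈ A} ω^{ℓa}|` satisfies
`μ ≤ (1/κ)√((1/m + (κ/2 - 1)β)² + (κ/2)²β²)` where `β = √((1/m)(κ + 1/m))`. -/
theorem harmonic_frame_coherence_bound_m_odd (n m κ : ℕ) [NeZero n] (hn : n.Prime)
    (hn_odd : Odd n) (hm_odd : Odd m) (hκ : m * κ = n - 1)
    (A : Subgroup (ZMod n)ˣ) [Fintype A] (hA : Nat.card A = m) :
    ∀ ℓ : (ZMod n)ˣ,
      (1 / (m : ℝ)) * ‖harmonicSum n A ℓ‖ ≤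
        (1 / (κ : ℝ)) * Real.sqrt
          ((1 / (m : ℝ) + ((κ : ℝ) / 2 - 1) *
              Real.sqrt ((1 / (m : ℝ)) * ((κ : ℝ) + 1 / (m : ℝ)))) ^ 2 +
            ((κ : ℝ) / 2) ^ 2 *
              Real.sqrt ((1 / (m : ℝ)) * ((κ : ℝ) + 1 / (m : ℝ))) ^ 2) := by
  intro ℓ
  have : Fact (2 < n) := ⟨hn.two_le.lt_of_ne' (hn_odd.ne_two_of_dvd_nat dvd_rfl)⟩
  have hneg : (-1 : (ZMod n)ˣ) ∉ A :=
    neg_one_notMem_of_odd_natCard (by simpa [Units.ext_iff] using ZMod.neg_one_ne_one) (hA ▸ hm_odd)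
  have hκ_real : (m : ℝ) * κ = Fintype.card (ZMod n) - 1 := by
    rw [ZMod.card, ← Nat.cast_mul, hκ, Nat.cast_pred hn.pos]
  rw [harmonicSum_eq_gaussianPeriod]
  exact harmonic_frame_coherence_bound_m_odd_general (ZMod.isPrimitive_stdAddChar n) hneg
    (congrArg Nat.cast hA) hκ_real ℓ
end

section
/- Let p be a prime, r a positive integer, n = p^r, m a divisor of n−1, A the unique subgroup of order m of 𝔽_{p^r}ˣ, ω = e^{2πi/p}, and Tr : 𝔽_{p^r} → 𝔽_p the field trace. Then the quantity |Σ_{a ∈ A} ω^{Tr(a z)}| takes the same value for all nonzero z ∈ 𝔽_{p^r} (i.e. the associated frame is equiangular, hence tight and equiangular with coherence meeting the Welch bound √((n−m)/(m(n−1)))) if and only if A is a difference set in the additive group of 𝔽_{p^r}, i.e. there exists λ such that for every nonzero z ∈ 𝔽_{p^r}, the number of ordered pairs (a, b) ∈ A × A with a − b = z equals λ. In particular, A is such a difference set whenever (p^r − 1)/m = 2 and m is odd. -/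
/-- `∑_{a ∈ A} ω^{Tr(a·z)}` with `ω = e^{2πi/p}`, for a subgroup `A` of the group of units
of the finite field `F` of characteristic `p`, where `Tr` is the field trace to `𝔽_p`. -/
noncomputable def traceCharSum (p : ℕ) (F : Type*) [Field F] [Algebra (ZMod p) F]
    (A : Subgroup Fˣ) [Fintype A] (z : F) : ℂ :=
  ∑ a : A, Complex.exp (2 * Real.pi * Complex.I / p) ^
      (Algebra.trace (ZMod p) F (((a : Fˣ) : F) * z)).val

/-!
Let `D` be a finite subset of a finite abelian group `G`. The function `ψ ↦ ‖∑ x ∈ D, ψ x‖ ^ 2` on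
the characters of `G` is the Fourier transform of the function counting the representations of
`z ∈ G` as a difference of elements of `D`. Fourier transformation preserves the class of functions
that are constant away from the origin, so one of the two is such a function iff the other is.
Evaluating the inverse transform at `0` determines the constant, which yields the Welch bound.
For a finite field, the nontrivial characters are the `x ↦ ω ^ Tr (x * z)` with `z ≠ 0`.

If `A` has index two in the units and odd order, then `-1 ∉ A`, so every nonzero `z` lies in `A` or
in `-A`. The number of representations of `z` as a difference in `A` is invariant under `z ↦ -z` and
under multiplication by `A`, hence constant.
-/

open Finset
open scoped Pointwise

theorem sum_mul_eq_of_forall_ne {ι R : Type*} [Fintype ι] [NonUnitalNonAssocRing R]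
    {f : ι → R} {i₀ : ι} {k : R} (hf : ∀ i, i ≠ i₀ → f i = k) (g : ι → R) :
    ∑ i, f i * g i = (f i₀ - k) * g i₀ + k * ∑ i, g i := by
  have hdiff : ∑ i, (f i - k) * g i = (f i₀ - k) * g i₀ :=
    Fintype.sum_eq_single i₀ fun i hi ↦ by rw [hf i hi, sub_self, zero_mul]
  rw [← hdiff, mul_sum, ← sum_add_distrib]
  simp only [sub_mul, sub_add_cancel]

section AddGroup

variable {G : Type*} [AddGroup G] [DecidableEq G]

/-- A finite subset `D` of an additive group is a difference set if every nonzero element has the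
same number of representations as a difference of two elements of `D`. This number is encoded as
the convolution of `D` with `-D`. -/
def IsDifferenceSet (D : Finset G) : Prop :=
  ∃ lam : ℕ, ∀ z : G, z ≠ 0 → D.addConvolution (-D) z = lam

theorem addConvolution_neg_self_zero (D : Finset G) : D.addConvolution (-D) 0 = #D := by
  rw [← card_inter_vadd, zero_vadd, inter_self]

theorem addConvolution_neg_self_neg (D : Finset G) (z : G) :
    D.addConvolution (-D) (-z) = D.addConvolution (-D) z := by
  rw [addConvolution_neg, neg_neg]

theorem sum_addConvolution_neg_mul [Fintype G] {R : Type*} [NonAssocSemiring R] (D E : Finset G)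
    (f : G → R) :
    ∑ z, (D.addConvolution (-E) z : R) * f z = ∑ x ∈ D, ∑ y ∈ E, f (x - y) := by
  rw [← sum_product', ← sum_fiberwise (D ×ˢ E) fun q ↦ q.1 - q.2]
  refine sum_congr rfl fun z _ ↦ ?_
  rw [← card_sub_eq, ← nsmul_eq_mul]
  exact (sum_eq_card_nsmul fun q hq ↦ by rw [(mem_filter.1 hq).2]).symm

end AddGroup

section AddCommGroup

variable {G : Type*} [AddCommGroup G]

/-- The sum of the character `ψ` over `D`, i.e. the Fourier coefficient at `ψ` of the indicator
function of `D`. -/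
noncomputable def charSum (D : Finset G) (ψ : AddChar G ℂ) : ℂ := ∑ x ∈ D, ψ x

/-- The frame obtained by restricting the characters of `G` to `D` is equiangular. The inner
product of the columns labelled `ψ` and `χ` is the sum of `ψ - χ` over `D`, so only the sums of the
nontrivial characters matter. -/
def IsEquiangular (D : Finset G) : Prop :=
  ∃ c : ℝ, ∀ ψ : AddChar G ℂ, ψ ≠ 0 → ‖charSum D ψ‖ = c

theorem charSum_zero (D : Finset G) : charSum D 0 = #D := by
  simp [charSum]

variable [DecidableEq G]

theorem sq_norm_charSum [Fintype G] (D : Finset G) (ψ : AddChar G ℂ) :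
    (‖charSum D ψ‖ : ℂ) ^ 2 = ∑ z, D.addConvolution (-D) z * ψ z := by
  rw [sum_addConvolution_neg_mul, ← Complex.mul_conj', charSum, map_sum, sum_mul_sum]
  simp only [sub_eq_add_neg, AddChar.map_add_eq_mul, AddChar.map_neg_eq_conj]

theorem sum_sq_norm_charSum_mul [Fintype G] (D : Finset G) (w : G) :
    ∑ ψ : AddChar G ℂ, (‖charSum D ψ‖ : ℂ) ^ 2 * ψ (-w) =
      Fintype.card G * D.addConvolution (-D) w := by
  calc ∑ ψ : AddChar G ℂ, (‖charSum D ψ‖ : ℂ) ^ 2 * ψ (-w)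
      = ∑ z, D.addConvolution (-D) z * ∑ ψ : AddChar G ℂ, ψ (z - w) := by
        simp only [sq_norm_charSum, sum_mul, mul_sum, sub_eq_add_neg, AddChar.map_add_eq_mul,
          mul_assoc]
        exact sum_comm
    _ = Fintype.card G * D.addConvolution (-D) w := by
        simp [AddChar.sum_apply_eq_ite, sub_eq_zero, mul_comm]

theorem sq_norm_charSum_of_addConvolution_eq [Finite G] {D : Finset G} {lam : ℕ}
    (hD : ∀ z : G, z ≠ 0 → D.addConvolution (-D) z = lam) {ψ : AddChar G ℂ} (hψ : ψ ≠ 0) :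
    ‖charSum D ψ‖ ^ 2 = (#D : ℝ) - lam := by
  have := Fintype.ofFinite G
  have h := sq_norm_charSum D ψ
  rw [sum_mul_eq_of_forall_ne (i₀ := 0) (k := (lam : ℂ)) (fun z hz ↦ by rw [hD z hz]),
    AddChar.sum_eq_zero_iff_ne_zero.2 hψ, addConvolution_neg_self_zero, AddChar.map_zero_eq_one,
    mul_one, mul_zero, add_zero] at h
  exact_mod_cast h

theorem card_mul_addConvolution_of_norm_charSum_eq [Fintype G] {D : Finset G} {c : ℝ}
    (hc : ∀ ψ : AddChar G ℂ, ψ ≠ 0 → ‖charSum D ψ‖ = c) (w : G) :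
    (Fintype.card G : ℝ) * D.addConvolution (-D) w =
      (#D : ℝ) ^ 2 - c ^ 2 + c ^ 2 * if w = 0 then (Fintype.card G : ℝ) else 0 := by
  have h := sum_sq_norm_charSum_mul D w
  rw [sum_mul_eq_of_forall_ne (i₀ := 0) (k := (c : ℂ) ^ 2) (fun ψ hψ ↦ by rw [hc ψ hψ]),
    AddChar.sum_apply_eq_ite, charSum_zero, Complex.norm_natCast, AddChar.zero_apply,
    mul_one] at h
  simp only [neg_eq_zero] at h
  split_ifs at h ⊢ <;> exact_mod_cast h.symm

theorem isEquiangular_iff_isDifferenceSet [Finite G] (D : Finset G) :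
    IsEquiangular D ↔ IsDifferenceSet D := by
  have := Fintype.ofFinite G
  constructor
  · rintro ⟨c, hc⟩
    rcases subsingleton_or_nontrivial G with _ | _
    · exact ⟨0, fun z hz ↦ (hz (Subsingleton.elim z 0)).elim⟩
    · obtain ⟨w, hw⟩ := exists_ne (0 : G)
      refine ⟨D.addConvolution (-D) w, fun z hz ↦ ?_⟩
      have hzw : (Fintype.card G : ℝ) * D.addConvolution (-D) z =
          Fintype.card G * D.addConvolution (-D) w := by
        rw [card_mul_addConvolution_of_norm_charSum_eq hc,
          card_mul_addConvolution_of_norm_charSum_eq hc, if_neg hz, if_neg hw]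
      exact Nat.eq_of_mul_eq_mul_left Fintype.card_pos (mod_cast hzw)
  · rintro ⟨lam, hD⟩
    refine ⟨√(#D - lam), fun ψ hψ ↦ ?_⟩
    rw [← sq_norm_charSum_of_addConvolution_eq hD hψ, Real.sqrt_sq (norm_nonneg _)]

end AddCommGroup

theorem IsEquiangular.one_div_card_mul_norm_charSum {G : Type*} [AddCommGroup G] [Fintype G]
    {D : Finset G} (hD : IsEquiangular D) (hne : D.Nonempty) {ψ : AddChar G ℂ} (hψ : ψ ≠ 0) :
    1 / (#D : ℝ) * ‖charSum D ψ‖ =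
      √((Fintype.card G - #D) / (#D * (Fintype.card G - 1))) := by
  classical
  obtain ⟨c, hc⟩ := hD
  obtain ⟨x, hx⟩ := AddChar.ne_zero_iff.1 hψ
  have hcard : (1 : ℝ) < Fintype.card G :=
    mod_cast Fintype.one_lt_card_iff.2 ⟨x, 0, fun h ↦ hx (by rw [h, AddChar.map_zero_eq_one])⟩
  have hDpos : (0 : ℝ) < #D := mod_cast hne.card_pos
  have hmoment := card_mul_addConvolution_of_norm_charSum_eq hc 0
  rw [addConvolution_neg_self_zero, if_pos rfl, ← hc ψ hψ] at hmoment
  have hsq : (Fintype.card G - #D) / (#D * (Fintype.card G - 1)) =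
      (1 / (#D : ℝ) * ‖charSum D ψ‖) ^ 2 := by
    rw [div_eq_iff (mul_ne_zero hDpos.ne' (sub_pos.2 hcard).ne')]
    field_simp
    linarith
  rw [hsq, Real.sqrt_sq (by positivity)]

theorem mulShift_bijective_of_isPrimitive {R : Type*} [CommRing R] [Finite R] {ψ : AddChar R ℂ}
    (hψ : ψ.IsPrimitive) : Function.Bijective ψ.mulShift := by
  have := Fintype.ofFinite R
  exact (Fintype.bijective_iff_injective_and_card _).2
    ⟨AddChar.to_mulShift_inj_of_isPrimitive hψ, AddChar.card_eq.symm⟩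

theorem forall_mulShift_iff_forall_addChar {R : Type*} [CommRing R] [Finite R] {ψ : AddChar R ℂ}
    (hψ : ψ.IsPrimitive) {P : AddChar R ℂ → Prop} :
    (∀ z, z ≠ 0 → P (ψ.mulShift z)) ↔ ∀ χ, χ ≠ 0 → P χ := by
  have hne (z : R) : ψ.mulShift z ≠ 0 ↔ z ≠ 0 :=
    ⟨fun h hz ↦ h (by rw [hz, AddChar.mulShift_zero, AddChar.one_eq_zero]), fun hz ↦ hψ hz⟩
  rw [(mulShift_bijective_of_isPrimitive hψ).surjective.forall]
  simp only [hne]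

/-- The additive character `x ↦ ω ^ Tr x` with `ω = exp (2πi / p)`, of which all characters of a
finite field `F` are multiplicative shifts. -/
noncomputable def traceChar (p : ℕ) [NeZero p] (F : Type*) [Field F] [Algebra (ZMod p) F] :
    AddChar F ℂ :=
  (AddChar.zmodChar p (Complex.isPrimitiveRoot_exp p (NeZero.ne p)).pow_eq_one).compAddMonoidHom
    (Algebra.trace (ZMod p) F).toAddMonoidHom

theorem isPrimitive_traceChar (p : ℕ) [Fact p.Prime] (F : Type*) [Field F] [Finite F]
    [Algebra (ZMod p) F] : (traceChar p F).IsPrimitive := by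
  have hω := Complex.isPrimitiveRoot_exp p (NeZero.ne p)
  have hζ : AddChar.zmodChar p hω.pow_eq_one ≠ 0 := by
    simpa only [AddChar.mulShift_one] using!
      AddChar.zmodChar_primitive_of_primitive_root p hω one_ne_zero
  exact .of_ne_one ((AddChar.compAddMonoidHom_injective_left _
    (Algebra.trace_surjective (ZMod p) F)).ne hζ)

section Units

variable {M : Type*} [Monoid M]

/-- The elements of a finite subgroup of `Mˣ`, as a subset of `M`. For a ring `M` this
is the subset of the additive group whose differences and character sums are considered. -/
def unitsFinset (A : Subgroup Mˣ) [Fintype A] : Finset M :=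
  univ.map ⟨fun a : A ↦ ((a : Mˣ) : M), Units.val_injective.comp Subtype.val_injective⟩

theorem mem_unitsFinset {A : Subgroup Mˣ} [Fintype A] {x : M} :
    x ∈ unitsFinset A ↔ ∃ u ∈ A, (u : M) = x := by
  simp [unitsFinset]

theorem card_unitsFinset (A : Subgroup Mˣ) [Fintype A] :
    #(unitsFinset A) = Nat.card A := by
  rw [unitsFinset, card_map, card_univ, Nat.card_eq_fintype_card]

theorem mul_mem_unitsFinset_iff {A : Subgroup Mˣ} [Fintype A] {u : Mˣ}
    (hu : u ∈ A) {x : M} : u * x ∈ unitsFinset A ↔ x ∈ unitsFinset A := by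
  simp only [mem_unitsFinset]
  constructor
  · rintro ⟨v, hv, h⟩
    exact ⟨u⁻¹ * v, A.mul_mem (A.inv_mem hu) hv,
      by rw [Units.val_mul, h, Units.inv_mul_cancel_left]⟩
  · rintro ⟨v, hv, rfl⟩
    exact ⟨u * v, A.mul_mem hu hv, Units.val_mul u v⟩

end Units

theorem ncard_sub_eq_addConvolution {R : Type*} [Ring R] [DecidableEq R] (A : Subgroup Rˣ)
    [Fintype A] (z : R) :
    Set.ncard {q : Rˣ × Rˣ | q.1 ∈ A ∧ q.2 ∈ A ∧ ((q.1 : R) - (q.2 : R) = z)} =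
      (unitsFinset A).addConvolution (-unitsFinset A) z := by
  have himage : Prod.map Units.val Units.val ''
      {q : Rˣ × Rˣ | q.1 ∈ A ∧ q.2 ∈ A ∧ ((q.1 : R) - (q.2 : R) = z)} =
        ({q ∈ unitsFinset A ×ˢ unitsFinset A | q.1 - q.2 = z} : Finset (R × R)) := by
    ext ⟨x, y⟩
    simp only [Set.mem_image, Set.mem_ofPred_eq, Prod.exists, Prod.map_apply, Prod.mk.injEq,
      coe_filter, mem_product, mem_unitsFinset]
    grind
  rw [← card_sub_eq, ← Set.ncard_coe_finset, ← himage,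
    Set.ncard_image_of_injective _ (Units.val_injective.prodMap Units.val_injective)]

theorem addConvolution_unitsFinset_mul {R : Type*} [Ring R] [DecidableEq R] {A : Subgroup Rˣ}
    [Fintype A] {u : Rˣ} (hu : u ∈ A) (z : R) :
    (unitsFinset A).addConvolution (-unitsFinset A) (u * z) =
      (unitsFinset A).addConvolution (-unitsFinset A) z := by
  rw [← card_sub_eq, ← card_sub_eq]
  refine (card_equiv (u.mulLeft.prodCongr u.mulLeft) fun q ↦ ?_).symm
  simp [mul_mem_unitsFinset_iff hu, ← mul_sub]

theorem isDifferenceSet_unitsFinset_of_index_eq_two {K : Type*} [DivisionRing K] [DecidableEq K]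
    {A : Subgroup Kˣ} [Fintype A] (hindex : A.index = 2) (hneg : -1 ∉ A) :
    IsDifferenceSet (unitsFinset A) := by
  have hmem (u : Kˣ) (hu : u ∈ A) : (unitsFinset A).addConvolution (-unitsFinset A) (u : K) =
      (unitsFinset A).addConvolution (-unitsFinset A) 1 := by
    simpa only [mul_one] using addConvolution_unitsFinset_mul hu (1 : K)
  refine ⟨(unitsFinset A).addConvolution (-unitsFinset A) 1, fun z hz ↦ ?_⟩
  lift z to Kˣ using hz.isUnit
  by_cases hzA : z ∈ A
  · exact hmem z hzA
  · have hnegz : -z ∈ A := by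
      rw [← neg_one_mul, Subgroup.mul_mem_iff_of_index_two hindex]
      exact iff_of_false hneg hzA
    rw [← addConvolution_neg_self_neg, ← Units.val_neg, hmem (-z) hnegz]

theorem neg_one_notMem_of_index_eq_two_of_odd_card {F : Type*} [Field F] [Finite F]
    {A : Subgroup Fˣ} (hindex : A.index = 2) (hodd : Odd (Nat.card A)) : -1 ∉ A := by
  classical
  have := Fintype.ofFinite F
  intro hmem
  have hdvd : orderOf (-1 : F) ∣ Nat.card A := by
    simpa only [← orderOf_units, Units.val_neg, Units.val_one] using A.orderOf_dvd_natCard hmem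
  have hcard : Nat.card A * 2 = Fintype.card F - 1 := by
    rw [← hindex, A.card_mul_index, Nat.card_eq_fintype_card, Fintype.card_units]
  by_cases hchar : ringChar F = 2
  · have := FiniteField.even_card_of_char_two hchar
    have := Fintype.one_lt_card (α := F)
    omega
  · rw [orderOf_neg_one, if_neg hchar] at hdvd
    exact hodd.not_two_dvd_nat hdvd

theorem traceCharSum_eq_charSum (p : ℕ) [NeZero p] (F : Type*) [Field F] [Algebra (ZMod p) F]
    (A : Subgroup Fˣ) [Fintype A] (z : F) :
    traceCharSum p F A z = charSum (unitsFinset A) ((traceChar p F).mulShift z) := by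
  simp only [charSum, unitsFinset, sum_map, Function.Embedding.coeFn_mk, AddChar.mulShift_apply,
    mul_comm z]
  rfl

/-- Theorem 9 (difference sets). With `n = p^r`, `m ∣ n - 1` and `A` the unique order-`m`
subgroup of `𝔽_{p^r}ˣ`, the quantities `|∑_{a ∈ A} ω^{Tr(az)}|` take a common value over
all `z ≠ 0` (the frame is equiangular — and then tight equiangular, with coherence meeting
the Welch bound `√((n-m)/(m(n-1)))`) iff `A` is a difference set in the additive group of
`𝔽_{p^r}`, i.e. every `z ≠ 0` arises as a difference `a - b` of elements of `A` the same
number `λ` of times. In particular this holds whenever `(p^r - 1)/m = 2` and `m` is odd. -/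
theorem equiangular_iff_difference_set (p r : ℕ) [Fact p.Prime] (hr : 0 < r)
    (F : Type*) [Field F] [Fintype F] [Algebra (ZMod p) F]
    (n : ℕ) (hn : n = p ^ r) (hF : Fintype.card F = n)
    (m : ℕ) (hm : m ∣ n - 1) (hm0 : 0 < m)
    (A : Subgroup Fˣ) [Fintype A] (hA : Nat.card A = m) :
    ((∃ c : ℝ, ∀ z : F, z ≠ 0 → ‖traceCharSum p F A z‖ = c) ↔
      (∃ lam : ℕ, ∀ z : F, z ≠ 0 →
        Set.ncard {q : Fˣ × Fˣ | q.1 ∈ A ∧ q.2 ∈ A ∧ ((q.1 : F) - (q.2 : F) = z)}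
          = lam)) ∧
    ((∃ c : ℝ, ∀ z : F, z ≠ 0 → ‖traceCharSum p F A z‖ = c) →
      ∀ z : F, z ≠ 0 →
        (1 / (m : ℝ)) * ‖traceCharSum p F A z‖ =
          Real.sqrt (((n : ℝ) - m) / ((m : ℝ) * ((n : ℝ) - 1)))) ∧
    ((m * 2 = n - 1 ∧ Odd m) →
      ∃ lam : ℕ, ∀ z : F, z ≠ 0 →
        Set.ncard {q : Fˣ × Fˣ | q.1 ∈ A ∧ q.2 ∈ A ∧ ((q.1 : F) - (q.2 : F) = z)}
          = lam) := by
  classical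
  have hprim := isPrimitive_traceChar p F
  have hequi : (∃ c : ℝ, ∀ z : F, z ≠ 0 → ‖traceCharSum p F A z‖ = c) ↔
      IsEquiangular (unitsFinset A) := by
    simp only [traceCharSum_eq_charSum, IsEquiangular]
    exact exists_congr fun c ↦ forall_mulShift_iff_forall_addChar hprim (P := (‖charSum _ ·‖ = c))
  have hcard : #(unitsFinset A) = m := (card_unitsFinset A).trans hA
  simp only [hequi, ncard_sub_eq_addConvolution]
  refine ⟨isEquiangular_iff_isDifferenceSet _, fun hA_equi z hz ↦ ?_, fun ⟨hhalf, hodd⟩ ↦ ?_⟩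
  · rw [traceCharSum_eq_charSum, ← hF, ← hcard]
    exact hA_equi.one_div_card_mul_norm_charSum (card_pos.1 (hcard ▸ hm0)) (hprim hz)
  · have hindex : A.index = 2 := by
      refine Nat.eq_of_mul_eq_mul_left hm0 ?_
      rw [hhalf, ← hA, A.card_mul_index, Nat.card_eq_fintype_card, Fintype.card_units, hF]
    exact isDifferenceSet_unitsFinset_of_index_eq_two hindex
      (neg_one_notMem_of_index_eq_two_of_odd_card hindex (hA ▸ hodd))
end

section
/- Let p be a prime with p ≡ 3 (mod 4), r an odd positive integer, n = p^r, m = (n−1)/2, and A the unique subgroup of order m of 𝔽_{p^r}ˣ (the group of nonzero squares). Let ω = e^{2πi/p} and Tr : 𝔽_{p^r} → 𝔽_p the field trace. Then for every nonzero z ∈ 𝔽_{p^r}, the normalized inner product satisfies (1/m)|Σ_{a ∈ A} ω^{Tr(a z)}| = √((n − m)/(m(n − 1))); that is, the columns of the frame matrix M = [ω^{Tr(a_i x_j)}]_{i=1..m, j=1..n} form a tight equiangular frame whose coherence meets the Welch lower bound, and whose entries are p-th roots of unity. -/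
/-!
Over the field `F` with `n` elements, let `χ` be the quadratic character and `ψ` a nontrivial
additive character. On `Fˣ` the function `χ + 1` is twice the indicator of the subgroup `A` of
squares, so `2 ∑_{a ∈ A} ψ a` is the sum of the Gauss sums `G(χ, ψ)` and `G(1, ψ) = -1`. As
`n ≡ 3 (mod 4)`, `χ (-1) = -1` and `G(χ, ψ)² = -n`. Hence `G(χ, ψ)` is purely imaginary and
`‖2 ∑_{a ∈ A} ψ a‖² = ‖G(χ, ψ) - 1‖² = n + 1`, which is the Welch bound for `m = (n - 1) / 2`.
-/

theorem pow_mod_four_eq_three {p r : ℕ} (hp : p % 4 = 3) (hr : Odd r) : p ^ r % 4 = 3 := by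
  obtain ⟨k, rfl⟩ := hr
  rw [pow_succ, pow_mul, Nat.mul_mod, Nat.pow_mod, Nat.pow_mod p, hp]
  norm_num

section IndexTwo

theorem mem_iff_isSquare_of_index_eq_two {G : Type*} [Group G] [IsCyclic G] {H : Subgroup G}
    (hH : H.index = 2) {a : G} : a ∈ H ↔ IsSquare a := by
  refine ⟨fun ha => ?_, ?_⟩
  · obtain ⟨g, hg⟩ := IsCyclic.exists_generator (α := G)
    have hgH : g ∉ H := fun h => by
      have htop : H = ⊤ := (Subgroup.eq_top_iff' H).2 fun x =>
        Subgroup.zpowers_le.2 h (hg x)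
      simp [htop] at hH
    obtain ⟨k, rfl⟩ := Subgroup.mem_zpowers_iff.1 (hg a)
    obtain hk | ⟨l, rfl⟩ := Int.even_or_odd k
    · exact hk.isSquare_zpow g
    · have hsq : g ^ (2 * l) ∈ H := by
        rw [zpow_mul, zpow_ofNat]
        exact H.zpow_mem (Subgroup.sq_mem_of_index_two hH g) l
      rw [zpow_add_one, H.mul_mem_cancel_left hsq] at ha
      exact absurd ha hgH
  · rintro ⟨b, rfl⟩
    exact Subgroup.mul_self_mem_of_index_two hH b

theorem isSquare_units_val_iff {M : Type*} [GroupWithZero M] {u : Mˣ} :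
    IsSquare (u : M) ↔ IsSquare u := by
  refine ⟨fun ⟨x, hx⟩ => ?_, fun h => h.map (Units.coeHom M)⟩
  have hx0 : x ≠ 0 := by
    rintro rfl
    simp at hx
  exact ⟨Units.mk0 x hx0, Units.ext hx⟩

theorem index_eq_two_of_two_mul_card {F : Type*} [Field F] [Finite F] {A : Subgroup Fˣ}
    (hA : 2 * Nat.card A = Nat.card F - 1) : A.index = 2 := by
  have hmul : Nat.card A * A.index = Nat.card A * 2 := by
    rw [A.card_mul_index, Nat.card_units, mul_comm, hA]
  exact Nat.eq_of_mul_eq_mul_left Nat.card_pos hmul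

end IndexTwo

section GaussSum

theorem gaussSum_eq_sum_units {R R' : Type*} [CommRing R] [Fintype R] [Fintype Rˣ] [CommRing R']
    (χ : MulChar R R') (ψ : AddChar R R') : gaussSum χ ψ = ∑ u : Rˣ, χ u * ψ u :=
  (Fintype.sum_of_injective _ Units.val_injective _ _
    (fun x hx => by rw [χ.map_nonunit hx, zero_mul]) fun _ => rfl).symm

variable {F : Type*} [Field F] [Fintype F] [DecidableEq F] (R : Type*) [CommRing R]

/-- The quadratic character of `F` with values in an arbitrary commutative ring `R` instead of
`ℤ`, so that it can be paired with additive characters `F → R` in a Gauss sum. -/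
abbrev quadraticCharIn : MulChar F R :=
  (quadraticChar F).ringHomComp (Int.castRingHom R)

variable {R}

theorem two_mul_sum_subgroup_eq_gaussSum_add {A : Subgroup Fˣ} [Fintype A] (hA : A.index = 2)
    (ψ : AddChar F R) :
    2 * ∑ a : A, ψ (a : Fˣ) = gaussSum (quadraticCharIn R) ψ + gaussSum 1 ψ := by
  classical
  have hχ (u : Fˣ) : quadraticCharIn R (u : F) + 1 = if u ∈ A then 2 else 0 := by
    have hu : u ∈ A ↔ quadraticChar F u = 1 := by
      rw [mem_iff_isSquare_of_index_eq_two hA, ← isSquare_units_val_iff,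
        quadraticChar_one_iff_isSquare u.ne_zero]
    rcases quadraticChar_dichotomy u.ne_zero with h | h
    · simp [hu, h, one_add_one_eq_two]
    · simp [hu, h]
  calc 2 * ∑ a : A, ψ (a : Fˣ)
      = ∑ u : Fˣ, if u ∈ A then 2 * ψ u else 0 := by
        rw [← Finset.sum_filter, ← Finset.mul_sum, Finset.sum_subtype _ (p := (· ∈ A)) (by simp)]
    _ = ∑ u : Fˣ, (quadraticCharIn R (u : F) + 1) * ψ u := by simp only [hχ, ite_mul, zero_mul]
    _ = gaussSum (quadraticCharIn R) ψ + gaussSum 1 ψ := by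
        simp only [gaussSum_eq_sum_units, add_mul, Finset.sum_add_distrib, MulChar.one_apply_coe]

theorem gaussSum_quadraticCharIn_sq_of_card_mod_four_eq_three [IsDomain R]
    (hR : ringChar R ≠ 2) (hF : Fintype.card F % 4 = 3) {ψ : AddChar F R} (hψ : ψ ≠ 1) :
    gaussSum (quadraticCharIn R) ψ ^ 2 = -(Fintype.card F : R) := by
  have hF2 : ringChar F ≠ 2 := fun h => by
    have := FiniteField.even_card_of_char_two h
    omega
  have hne : quadraticCharIn (F := F) R ≠ 1 := fun h => by
    obtain ⟨u, hu⟩ := quadraticChar_exists_neg_one' hF2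
    have hu1 : quadraticCharIn R (u : F) = 1 := by rw [h, MulChar.one_apply_coe]
    simp [hu, Ring.neg_one_ne_one_of_char_ne_two hR] at hu1
  have hneg : quadraticCharIn R (-1 : F) = -1 := by
    rw [MulChar.ringHomComp_apply, quadraticChar_neg_one hF2, ZMod.χ₄_nat_three_mod_four hF]
    simp
  rw [gaussSum_sq hne ((quadraticChar_isQuadratic F).comp _) (.of_ne_one hψ), hneg, neg_one_mul]

end GaussSum

theorem norm_sub_ofReal_sq_of_sq_eq_neg {z : ℂ} {a : ℝ} (ha : 0 ≤ a) (hz : z ^ 2 = -a) (t : ℝ) :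
    ‖z - t‖ ^ 2 = a + t ^ 2 := by
  have hroot : (√a * Complex.I : ℂ) ^ 2 = -a := by
    rw [mul_pow, Complex.I_sq, ← Complex.ofReal_pow, Real.sq_sqrt ha, mul_neg_one]
  obtain rfl | rfl := sq_eq_sq_iff_eq_or_eq_neg.1 (hz.trans hroot.symm) <;>
    simp [Complex.sq_norm, Complex.normSq_apply, Real.mul_self_sqrt ha] <;> ring

theorem norm_sum_subgroup_of_index_eq_two {F : Type*} [Field F] [Fintype F]
    (hF : Fintype.card F % 4 = 3) {A : Subgroup Fˣ} [Fintype A] (hA : A.index = 2)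
    {ψ : AddChar F ℂ} (hψ : ψ ≠ 1) :
    ‖∑ a : A, ψ (a : Fˣ)‖ = √(Fintype.card F + 1) / 2 := by
  classical
  have hsum : 2 * ∑ a : A, ψ (a : Fˣ) = gaussSum (quadraticCharIn ℂ) ψ - (1 : ℝ) := by
    rw [two_mul_sum_subgroup_eq_gaussSum_add hA, gaussSum_one_left hψ, Complex.ofReal_one,
      sub_eq_add_neg]
  have hgauss : gaussSum (quadraticCharIn ℂ) ψ ^ 2 = -((Fintype.card F : ℝ) : ℂ) := by
    simpa using
      gaussSum_quadraticCharIn_sq_of_card_mod_four_eq_three (by simp [ringChar.eq_zero]) hF hψ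
  have hnorm : (2 * ‖∑ a : A, ψ (a : Fˣ)‖) ^ 2 = Fintype.card F + 1 := by
    rw [← Complex.norm_two, ← norm_mul, hsum,
      norm_sub_ofReal_sq_of_sq_eq_neg (Nat.cast_nonneg _) hgauss, one_pow]
  rw [← hnorm, Real.sqrt_sq (by positivity), mul_div_cancel_left₀ _ two_ne_zero]

section TraceCharacter

/-- The canonical additive character `x ↦ e^{2πi Tr(x) / p}` of an algebra `F` over `𝔽_p`; the
character sum `traceCharSum` is built from its multiplicative shifts. -/
noncomputable def traceAddChar (p : ℕ) [NeZero p] (F : Type*) [CommRing F] [Algebra (ZMod p) F] :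
    AddChar F ℂ :=
  ZMod.stdAddChar.compAddMonoidHom (Algebra.trace (ZMod p) F).toAddMonoidHom

theorem traceAddChar_apply (p : ℕ) [NeZero p] {F : Type*} [CommRing F] [Algebra (ZMod p) F]
    (x : F) :
    traceAddChar p F x =
      Complex.exp (2 * Real.pi * Complex.I / p) ^ (Algebra.trace (ZMod p) F x).val := by
  simp only [traceAddChar, AddChar.compAddMonoidHom_apply, LinearMap.toAddMonoidHom_coe,
    ZMod.stdAddChar_apply, ZMod.toCircle_apply, ← Complex.exp_nat_mul]
  congr 1
  ring

variable (p : ℕ) [Fact p.Prime] (F : Type*) [Field F] [Algebra (ZMod p) F]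

theorem isPrimitive_traceAddChar [Finite F] : (traceAddChar p F).IsPrimitive := by
  refine .of_ne_one fun h => ?_
  obtain ⟨x, hx⟩ := Algebra.trace_surjective (ZMod p) F 1
  have h1 : ZMod.stdAddChar (1 : ZMod p) = ZMod.stdAddChar (0 : ZMod p) := by
    simpa [traceAddChar, hx] using DFunLike.congr_fun h x
  exact one_ne_zero (ZMod.injective_stdAddChar h1)

variable {F}

theorem traceCharSum_eq_sum_mulShift (A : Subgroup Fˣ) [Fintype A] (z : F) :
    traceCharSum p F A z = ∑ a : A, (traceAddChar p F).mulShift z (a : Fˣ) := by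
  simp only [traceCharSum, AddChar.mulShift_apply, traceAddChar_apply, mul_comm z]

end TraceCharacter

-- For `m = 0` both sides are `0`, through division by zero.
theorem sqrt_welch_of_eq_two_mul_add_one {m n : ℝ} (hm : 0 ≤ m) (hn : n = 2 * m + 1) :
    √((n - m) / (m * (n - 1))) = 1 / m * (√(n + 1) / 2) := by
  have hsq : (n - m) / (m * (n - 1)) = (1 / m * (√(n + 1) / 2)) ^ 2 := by
    rw [mul_pow, div_pow √(n + 1), Real.sq_sqrt (by linarith), hn]
    ring
  rw [hsq, Real.sqrt_sq (by positivity)]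

/-- Corollary 1. Let `p ≡ 3 (mod 4)` be a prime, `r` odd, `n = p^r`, `m = (n-1)/2`, and
`A` the unique subgroup of `𝔽_{p^r}ˣ` of order `m` (the nonzero squares). Then for every
`z ≠ 0`, `(1/m)|∑_{a ∈ A} ω^{Tr(az)}| = √((n-m)/(m(n-1)))`: the columns of
`M = [ω^{Tr(aᵢ xⱼ)}]` form a tight equiangular frame meeting the Welch bound, whose
entries are `p`-th roots of unity. -/
theorem paley_tight_equiangular_frame (p r : ℕ) [Fact p.Prime] (hp : p % 4 = 3)
    (hr_odd : Odd r) (hr : 0 < r)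
    (F : Type*) [Field F] [Fintype F] [Algebra (ZMod p) F]
    (n : ℕ) (hn : n = p ^ r) (hF : Fintype.card F = n)
    (m : ℕ) (hm : 2 * m = n - 1)
    (A : Subgroup Fˣ) [Fintype A] (hA : Nat.card A = m) :
    (∀ z : F, z ≠ 0 →
      (1 / (m : ℝ)) * ‖traceCharSum p F A z‖ =
        Real.sqrt (((n : ℝ) - m) / ((m : ℝ) * ((n : ℝ) - 1)))) ∧
    (∀ (a : Fˣ) (x : F),
      (Complex.exp (2 * Real.pi * Complex.I / p) ^
          (Algebra.trace (ZMod p) F (((a : F)) * x)).val) ^ p = 1) := by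
  refine ⟨fun z hz => ?_, fun a x => ?_⟩
  · have hn_mod : Fintype.card F % 4 = 3 := by rw [hF, hn, pow_mod_four_eq_three hp hr_odd]
    have hindex : A.index = 2 :=
      index_eq_two_of_two_mul_card (by rw [hA, hm, Nat.card_eq_fintype_card, hF])
    have hn_cast : (n : ℝ) = 2 * m + 1 := by
      norm_cast
      omega
    rw [traceCharSum_eq_sum_mulShift,
      norm_sum_subgroup_of_index_eq_two hn_mod hindex (isPrimitive_traceAddChar p F hz),
      hF, sqrt_welch_of_eq_two_mul_add_one m.cast_nonneg hn_cast]
  · rw [pow_right_comm, (Complex.isPrimitiveRoot_exp p (NeZero.ne p)).pow_eq_one, one_pow]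
end
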